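/- arXiv:1305.0868 — 2 statements merged into one kernel-verified Lean document; each statement's English description precedes it below -/
import Mathlib

section
/- Let F be a field and let f(z), g(z) ∈ F[z] be nonzero polynomials with gcd(f, g) = 1, and let s(y), t(y) ∈ F[y] be nonzero polynomials with gcd(s, t) = 1. Let d = max(deg f, deg g), and define α(y) = f(s(y)/t(y))·t(y)^d and β(y) = g(s(y)/t(y))·t(y)^d (both elements of F[y]). Then gcd(α(y), β(y)) = 1. -/
open Polynomial

lemma map_subst_of_ne {F K : Type*} [Field F] [Field K] (φ : Polynomial F →+* K)
    (f s t : Polynomial F) (d : ℕ) (hd : f.natDegree ≤ d) (ht : φ t ≠ 0) :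
    φ (∑ i ∈ Finset.range (d + 1), Polynomial.C (f.coeff i) * s ^ i * t ^ (d - i))
      = φ t ^ d * f.eval₂ (φ.comp Polynomial.C) (φ s / φ t) := by
  rw [Polynomial.eval₂_eq_sum_range' _ (Nat.lt_succ_of_le hd), map_sum, Finset.mul_sum]
  refine Finset.sum_congr rfl fun i hi => ?_
  have hi' : i ≤ d := Nat.lt_succ_iff.mp (Finset.mem_range.mp hi)
  have h : φ t ^ d = φ t ^ (d - i) * φ t ^ i := by
    rw [← pow_add, Nat.sub_add_cancel hi']
  simp only [map_mul, map_pow, RingHom.comp_apply, div_pow]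
  rw [h]
  field_simp

lemma map_subst_of_eq {F K : Type*} [Field F] [Field K] (φ : Polynomial F →+* K)
    (f s t : Polynomial F) (d : ℕ) (ht : φ t = 0) :
    φ (∑ i ∈ Finset.range (d + 1), Polynomial.C (f.coeff i) * s ^ i * t ^ (d - i))
      = φ (Polynomial.C (f.coeff d)) * φ s ^ d := by
  rw [map_sum, Finset.sum_range_succ, Finset.sum_eq_zero]
  · simp
  · intro i hi
    have : d - i ≠ 0 := by have := Finset.mem_range.mp hi; omega
    simp [ht, this]

/-- If `f, g ∈ F[z]` are nonzero and coprime, and `s, t ∈ F[y]` are nonzero and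
coprime, then with `d = max (deg f) (deg g)`, the polynomials
`α = f(s/t)·t^d` and `β = g(s/t)·t^d` are coprime. -/
theorem gcd_preserved_under_rational_substitution
    {F : Type*} [Field F] (f g s t : Polynomial F)
    (hf : f ≠ 0) (hg : g ≠ 0) (hs : s ≠ 0) (ht : t ≠ 0)
    (hfg : IsCoprime f g) (hst : IsCoprime s t) :
    IsCoprime
      (∑ i ∈ Finset.range (max f.natDegree g.natDegree + 1),
        Polynomial.C (f.coeff i) * s ^ i * t ^ (max f.natDegree g.natDegree - i))
      (∑ i ∈ Finset.range (max f.natDegree g.natDegree + 1),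
        Polynomial.C (g.coeff i) * s ^ i * t ^ (max f.natDegree g.natDegree - i)) := by
  set d := max f.natDegree g.natDegree with hd
  rw [← Ideal.isCoprime_span_singleton_iff, Ideal.isCoprime_iff_sup_eq]
  by_contra hne
  obtain ⟨M, hM, hle⟩ := Ideal.exists_le_maximal _ hne
  letI : Field (Polynomial F ⧸ M) := Ideal.Quotient.field M
  obtain ⟨φ, hφ⟩ : ∃ φ : Polynomial F →+* (Polynomial F ⧸ M), ∀ x, x ∈ M → φ x = 0 :=
    ⟨Ideal.Quotient.mk M, fun x hx => Ideal.Quotient.eq_zero_iff_mem.mpr hx⟩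
  have hα := hφ _ (hle (Ideal.mem_sup_left (Ideal.mem_span_singleton_self _)))
  have hβ := hφ _ (hle (Ideal.mem_sup_right (Ideal.mem_span_singleton_self _)))
  by_cases h0 : φ t = 0
  · have hs0 : φ s ≠ 0 := by
      intro h
      obtain ⟨a, b, hab⟩ := hst
      have := congrArg φ hab
      simp [h, h0] at this
    rw [map_subst_of_eq φ _ s t d h0] at hα hβ
    have hC : ∀ c : F, φ (Polynomial.C c) * φ s ^ d = 0 → c = 0 := by
      intro c hc
      have h1 := (mul_eq_zero.mp hc).resolve_right (pow_ne_zero _ hs0)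
      exact (map_eq_zero (φ.comp Polynomial.C)).mp h1
    have h1 := hC _ hα
    have h2 := hC _ hβ
    rcases max_choice f.natDegree g.natDegree with h | h
    · rw [hd, h] at h1
      exact hf (Polynomial.leadingCoeff_eq_zero.mp h1)
    · rw [hd, h] at h2
      exact hg (Polynomial.leadingCoeff_eq_zero.mp h2)
  · rw [map_subst_of_ne φ _ s t d (le_max_left _ _) h0] at hα
    rw [map_subst_of_ne φ _ s t d (le_max_right _ _) h0] at hβ
    have h1 := (mul_eq_zero.mp hα).resolve_left (pow_ne_zero _ h0)
    have h2 := (mul_eq_zero.mp hβ).resolve_left (pow_ne_zero _ h0)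
    obtain ⟨a, b, hab⟩ := hfg
    have := congrArg (Polynomial.eval₂ (φ.comp Polynomial.C) (φ s / φ t)) hab
    simp [Polynomial.eval₂_add, Polynomial.eval₂_mul, h1, h2] at this
end

section
/- Let G be a finite DAG, e and e' edges with e' reachable from e, and let e = e₁, e₂, …, e_k = e' be the bottlenecks between e and e' listed in topological order (a bottleneck is an edge whose removal destroys every directed path from e to e'). Then the transfer polynomial factors as m_{ee'}(x) = Π_{i=1}^{k-1} m_{e_i e_{i+1}}(x), and each factor m_{e_i e_{i+1}}(x) is an irreducible polynomial. -/
/-- Adjacency of edges in a network: edge `e'` can follow edge `e` in a path when the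
destination node of `e` is the source node of `e'`. -/
def EdgeAdj {V E : Type*} (src dst : E → V) (e e' : E) : Prop := dst e = src e'

/-- `l` is a directed path (a nonempty sequence of consecutively adjacent edges) from
edge `a` to edge `b`. -/
def IsEdgePath {V E : Type*} (src dst : E → V) (a b : E) (l : List E) : Prop :=
  l.Chain' (EdgeAdj src dst) ∧ l.head? = some a ∧ l.getLast? = some b

/-- The monomial `t_P(x)` of a path `P = (e₁,…,e_k)`: the product of the coding variables
`x_{eᵢeᵢ₊₁}` along the path. -/
noncomputable def pathMonomial {E : Type*} (F : Type*) [Field F] (l : List E) :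
    MvPolynomial (E × E) F :=
  ((l.zip l.tail).map fun p => (MvPolynomial.X p : MvPolynomial (E × E) F)).prod

/-- The transfer polynomial `m_{ab}(x) = Σ_{P ∈ P_{ab}} t_P(x)`, where `Paths a b` is the
(finite) set of directed paths from `a` to `b`. -/
noncomputable def transferPoly {E : Type*} (F : Type*) [Field F]
    (Paths : E → E → Finset (List E)) (a b : E) : MvPolynomial (E × E) F :=
  ∑ l ∈ Paths a b, pathMonomial F l

/-- Exponent vector of the monomial of a path. -/
noncomputable def pexp {E : Type*} : List E → (E × E →₀ ℕ)
  | [] => 0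
  | [_] => 0
  | a :: b :: l => Finsupp.single (a, b) 1 + pexp (b :: l)

theorem pathMonomial_eq {E : Type*} (F : Type*) [Field F] (l : List E) :
    pathMonomial F l = MvPolynomial.monomial (pexp l) (1 : F) := by
  induction l with
  | nil => simp [pathMonomial, pexp]
  | cons a l ih =>
    cases l with
    | nil => simp [pathMonomial, pexp]
    | cons b l =>
      have h : pathMonomial F (a :: b :: l) = MvPolynomial.X (a, b) * pathMonomial F (b :: l) := by
        simp [pathMonomial]
      rw [h, ih, pexp, MvPolynomial.X, MvPolynomial.monomial_mul, one_mul]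

theorem pexp_cons_cons {E : Type*} (a b : E) (l : List E) (v : E × E) :
    pexp (a :: b :: l) v ≠ 0 ↔ v = (a, b) ∨ pexp (b :: l) v ≠ 0 := by
  classical
  rw [pexp, Finsupp.add_apply, Finsupp.single_apply]
  split_ifs with h
  · simp [h]
  · simp [Ne.symm h]

theorem pexp_append {E : Type*} (s t : List E) (c : E) :
    pexp (s ++ c :: t) = pexp (s ++ [c]) + pexp (c :: t) := by
  induction s with
  | nil => simp [pexp]
  | cons a s ih =>
    cases s with
    | nil => simp [pexp]
    | cons b s =>
      simp only [List.cons_append] at ih ⊢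
      rw [pexp, ih, pexp, add_assoc]

theorem pexp_mem {E : Type*} (l : List E) (x y : E) (h : pexp l (x, y) ≠ 0) :
    x ∈ l ∧ y ∈ l.tail := by
  induction l with
  | nil => simp [pexp] at h
  | cons a l ih =>
    cases l with
    | nil => simp [pexp] at h
    | cons b l =>
      rw [pexp_cons_cons] at h
      rcases h with h | h
      · simp at h; simp [h]
      · have := ih h
        simp only [List.tail_cons] at this ⊢
        exact ⟨List.mem_cons_of_mem _ this.1, List.mem_cons_of_mem _ this.2⟩

theorem pexp_le_one {E : Type*} (l : List E) (hn : l.Nodup) (v : E × E) : pexp l v ≤ 1 := by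
  classical
  induction l with
  | nil => simp [pexp]
  | cons a l ih =>
    cases l with
    | nil => simp [pexp]
    | cons b l =>
      have h1 := ih hn.of_cons
      rw [pexp, Finsupp.add_apply, Finsupp.single_apply]
      split_ifs with h
      · have : pexp (b :: l) v = 0 := by
          by_contra h2
          rw [← h] at h2
          exact (List.nodup_cons.1 hn).1 (pexp_mem _ _ _ h2).1
        omega
      · omega

theorem pexp_unique {E : Type*} (l : List E) (hn : l.Nodup) (c g g' : E)
    (h : pexp l (c, g) ≠ 0) (h' : pexp l (c, g') ≠ 0) : g = g' := by
  induction l with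
  | nil => simp [pexp] at h
  | cons a l ih =>
    cases l with
    | nil => simp [pexp] at h
    | cons b l =>
      have hna := (List.nodup_cons.1 hn).1
      rw [pexp_cons_cons] at h h'
      rcases h with h | h <;> rcases h' with h' | h'
      · simp at h h'; rw [h.2, h'.2]
      · simp at h; exact absurd (h.1 ▸ (pexp_mem _ _ _ h').1) hna
      · simp at h'; exact absurd (h'.1 ▸ (pexp_mem _ _ _ h).1) hna
      · exact ih hn.of_cons h h'

theorem pexp_last {E : Type*} (l : List E) (hn : l.Nodup) (b g : E)
    (hl : l.getLast? = some b) : pexp l (b, g) = 0 := by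
  induction l with
  | nil => simp [pexp]
  | cons a l ih =>
    cases l with
    | nil => simp [pexp]
    | cons d l =>
      rw [List.getLast?_cons_cons] at hl
      by_contra h
      rw [← ne_eq, pexp_cons_cons] at h
      rcases h with h | h
      · simp at h
        exact (List.nodup_cons.1 hn).1 (h.1 ▸ List.mem_of_getLast? hl)
      · exact h (ih hn.of_cons hl)

theorem pexp_exists {E : Type*} (l : List E) (b c : E)
    (hl : l.getLast? = some b) (hc : c ∈ l) (hcb : c ≠ b) : ∃ g, pexp l (c, g) ≠ 0 := by
  induction l with
  | nil => simp at hc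
  | cons a l ih =>
    cases l with
    | nil => simp at hl hc; exact absurd (hc.trans hl) hcb
    | cons d l =>
      rw [List.getLast?_cons_cons] at hl
      rcases List.mem_cons.1 hc with h | h
      · exact ⟨d, by rw [pexp_cons_cons, h]; simp⟩
      · obtain ⟨g, hg⟩ := ih hl h
        exact ⟨g, (pexp_cons_cons _ _ _ _).2 (Or.inr hg)⟩

theorem pexp_inj {E : Type*} (l : List E) : ∀ (l' : List E) (a : E), l.Nodup → l'.Nodup →
    l.head? = some a → l'.head? = some a → pexp l = pexp l' → l = l' := by
  induction l with
  | nil => intro l' a _ _ h; simp at h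
  | cons x l ih =>
    intro l' a hn hn' h h' he
    cases l' with
    | nil => simp at h'
    | cons x' l' =>
      simp at h h'
      subst h h'
      cases l with
      | nil =>
        cases l' with
        | nil => rfl
        | cons y' l' =>
          have : pexp (x' :: y' :: l') (x', y') ≠ 0 := by rw [pexp_cons_cons]; simp
          rw [← he] at this
          simp [pexp] at this
      | cons y l =>
        have h1 : pexp (x' :: y :: l) (x', y) ≠ 0 := by rw [pexp_cons_cons]; simp
        cases l' with
        | nil => rw [he] at h1; simp [pexp] at h1
        | cons y' l' =>
          have h2 : pexp (x' :: y' :: l') (x', y') ≠ 0 := by rw [pexp_cons_cons]; simp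
          have h3 : y = y' := pexp_unique _ hn' x' y y' (he ▸ h1) h2
          subst h3
          rw [pexp, pexp] at he
          rw [ih (y :: l') y hn.of_cons hn'.of_cons rfl rfl (add_left_cancel he)]

theorem pexp_color {E : Type*} (C : E × E → Prop) (l : List E) : ∀ (a f : E),
    (∀ x c g, pexp (a :: f :: l) (x, c) ≠ 0 → pexp (a :: f :: l) (c, g) ≠ 0 → C (x, c) → C (c, g)) →
    C (a, f) → ∀ v, pexp (a :: f :: l) v ≠ 0 → C v := by
  induction l with
  | nil =>
    intro a f _ h v hv
    rw [pexp_cons_cons] at hv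
    rcases hv with rfl | hv
    · exact h
    · simp [pexp] at hv
  | cons g l ih =>
    intro a f hC h v hv
    rw [pexp_cons_cons] at hv
    rcases hv with rfl | hv
    · exact h
    · refine ih f g ?_ ?_ v hv
      · intro x c y h1 h2
        exact hC x c y ((pexp_cons_cons _ _ _ _).2 (Or.inr h1))
          ((pexp_cons_cons _ _ _ _).2 (Or.inr h2))
      · refine hC a f g ?_ ?_ h
        · rw [pexp_cons_cons]; simp
        · rw [pexp_cons_cons, pexp_cons_cons]; simp

open MvPolynomial in
theorem support_mul_disjoint {σ F : Type*} [Field F] (p q : MvPolynomial σ F)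
    (hd : ∀ v, v ∈ p.vars → v ∈ q.vars → False) (m n : σ →₀ ℕ) (hm : m ∈ p.support)
    (hn : n ∈ q.support) : m + n ∈ (p * q).support := by
  classical
  rw [mem_support_iff, coeff_mul, Finset.sum_eq_single (m, n)]
  · exact mul_ne_zero (mem_support_iff.1 hm) (mem_support_iff.1 hn)
  · rintro ⟨m', n'⟩ h hne
    by_contra h0
    have hm' : m' ∈ p.support := mem_support_iff.2 (left_ne_zero_of_mul h0)
    have hn' : n' ∈ q.support := mem_support_iff.2 (right_ne_zero_of_mul h0)
    have hs : m' + n' = m + n := by simpa using h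
    have hp : ∀ d ∈ p.support, ∀ v, d v ≠ 0 → v ∈ p.vars := fun d hd v hv =>
      (mem_vars_iff_mem_support v).2 ⟨d, hd, by simpa using hv⟩
    have hq : ∀ d ∈ q.support, ∀ v, d v ≠ 0 → v ∈ q.vars := fun d hd v hv =>
      (mem_vars_iff_mem_support v).2 ⟨d, hd, by simpa using hv⟩
    have key : ∀ v, m' v = m v ∧ n' v = n v := by
      intro v
      have h1 : m' v + n' v = m v + n v := by
        have := DFunLike.congr_fun hs v
        simpa using this
      by_cases hv : v ∈ p.vars
      · have h2 : n v = 0 := by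
          by_contra h; exact hd v hv (hq n hn v h)
        have h3 : n' v = 0 := by
          by_contra h; exact hd v hv (hq n' hn' v h)
        omega
      · have h2 : m v = 0 := by
          by_contra h; exact hv (hp m hm v h)
        have h3 : m' v = 0 := by
          by_contra h; exact hv (hp m' hm' v h)
        omega
    apply hne
    rw [Prod.mk.injEq]
    exact ⟨Finsupp.ext fun v => (key v).1, Finsupp.ext fun v => (key v).2⟩
  · intro h; simp at h

open MvPolynomial in
/-- Core of irreducibility: if the first variable of one path lies in `p`, then `q` is a unit. -/
theorem unit_of_first {E F : Type*} [Field F] (S : Finset (List E)) (a b : E)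
    (hnd : ∀ l ∈ S, l.Nodup) (hlast : ∀ l ∈ S, l.getLast? = some b)
    (hcons : ∀ l ∈ S, ∃ f t, l = a :: f :: t)
    (hnb : ∀ c, (∀ l ∈ S, c ∈ l) → c = a ∨ c = b)
    (p q : MvPolynomial (E × E) F) (hp0 : p ≠ 0) (hq0 : q ≠ 0)
    (hsupp : ∀ d, d ∈ (p * q).support ↔ ∃ l ∈ S, pexp l = d)
    (f0 : E) (t0 : List E) (hl0 : a :: f0 :: t0 ∈ S) (hf0 : (a, f0) ∈ p.vars) : IsUnit q := by
  classical
  have hdis : ∀ v, v ∈ p.vars → v ∈ q.vars → False := by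
    intro v h1 h2
    rw [mem_vars_iff_degreeOf_ne_zero] at h1 h2
    have h3 : degreeOf v (p * q) ≤ 1 := by
      rw [degreeOf_le_iff]
      intro d hd
      obtain ⟨l, hl, rfl⟩ := (hsupp d).1 hd
      exact pexp_le_one l (hnd l hl) v
    rw [degreeOf_mul_eq hp0 hq0] at h3
    omega
  have hp : ∀ d ∈ p.support, ∀ v, d v ≠ 0 → v ∈ p.vars := fun d hd v hv =>
    (mem_vars_iff_mem_support v).2 ⟨d, hd, by simpa using hv⟩
  have hq : ∀ d ∈ q.support, ∀ v, d v ≠ 0 → v ∈ q.vars := fun d hd v hv =>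
    (mem_vars_iff_mem_support v).2 ⟨d, hd, by simpa using hv⟩
  have split : ∀ l ∈ S, ∃ m ∈ p.support, ∃ n ∈ q.support, pexp l = m + n := by
    intro l hl
    have h := support_mul p q ((hsupp _).2 ⟨l, hl, rfl⟩)
    obtain ⟨m, hm, n, hn, h⟩ := Finset.mem_add.1 h
    exact ⟨m, hm, n, hn, h.symm⟩
  have join : ∀ m ∈ p.support, ∀ n ∈ q.support, ∃ l ∈ S, pexp l = m + n := fun m hm n hn =>
    (hsupp _).1 (support_mul_disjoint p q hdis m n hm hn)
  have add_ne : ∀ (m n : E × E →₀ ℕ) v, (m + n) v ≠ 0 ↔ m v ≠ 0 ∨ n v ≠ 0 := by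
    intro m n v
    rw [Finsupp.add_apply]; omega
  have first : ∀ f t, a :: f :: t ∈ S → (a, f) ∈ p.vars := by
    intro f t hl
    by_contra hf
    obtain ⟨m, hm, n, hn, he⟩ := split _ hl0
    obtain ⟨m', hm', n', hn', he'⟩ := split _ hl
    have h1 : pexp (a :: f0 :: t0) (a, f0) ≠ 0 := by rw [pexp_cons_cons]; simp
    have h2 : pexp (a :: f :: t) (a, f) ≠ 0 := by rw [pexp_cons_cons]; simp
    rw [he, add_ne] at h1
    rw [he', add_ne] at h2
    have h3 : m (a, f0) ≠ 0 := h1.resolve_right fun h => hdis _ hf0 (hq n hn _ h)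
    have h4 : n' (a, f) ≠ 0 := h2.resolve_left fun h => hf (hp m' hm' _ h)
    obtain ⟨l, hl, hle⟩ := join m hm n' hn'
    have : f0 = f := pexp_unique l (hnd l hl) a f0 f
      (by rw [hle, add_ne]; exact Or.inl h3) (by rw [hle, add_ne]; exact Or.inr h4)
    exact hf (this ▸ hf0)
  have all : ∀ l ∈ S, ∀ v, pexp l v ≠ 0 → v ∈ p.vars := by
    intro l hl
    obtain ⟨f, t, rfl⟩ := hcons l hl
    refine pexp_color (fun v => v ∈ p.vars) t a f ?_ (first f t hl)
    intro x c g h1 h2 hx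
    by_contra hg
    have hca : c ≠ a := by
      rintro rfl
      exact (List.nodup_cons.1 (hnd _ hl)).1 (pexp_mem _ _ _ h1).2
    have hcb : c ≠ b := by
      rintro rfl
      exact h2 (pexp_last _ (hnd _ hl) _ _ (hlast _ hl))
    have hbn : ∀ l' ∈ S, c ∈ l' := by
      intro l' hl'
      by_contra hc
      obtain ⟨m, hm, n, hn, he⟩ := split _ hl
      obtain ⟨m', hm', n', hn', he'⟩ := split _ hl'
      have h3 : m (x, c) ≠ 0 := by
        have := h1
        rw [he, add_ne] at this
        exact this.resolve_right fun h => hdis _ hx (hq n hn _ h)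
      obtain ⟨l2, hl2, hle⟩ := join m hm n' hn'
      have h4 : pexp l2 (x, c) ≠ 0 := by rw [hle, add_ne]; exact Or.inl h3
      obtain ⟨g', hg'⟩ := pexp_exists l2 b c (hlast _ hl2)
        (List.mem_of_mem_tail (pexp_mem _ _ _ h4).2) hcb
      rw [hle, add_ne] at hg'
      rcases hg' with h | h
      · have h5 : pexp (a :: f :: t) (c, g') ≠ 0 := by rw [he, add_ne]; exact Or.inl h
        have h6 := pexp_unique _ (hnd _ hl) c g g' h2 h5
        exact hg (h6 ▸ hp m hm _ h)
      · have h5 : pexp l' (c, g') ≠ 0 := by rw [he', add_ne]; exact Or.inr h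
        exact hc (pexp_mem _ _ _ h5).1
    rcases hnb c hbn with h | h
    · exact hca h
    · exact hcb h
  have hv : q.vars = ∅ := by
    rw [Finset.eq_empty_iff_forall_notMem]
    intro v hv
    obtain ⟨n, hn, hnv⟩ := (mem_vars_iff_mem_support v).1 hv
    obtain ⟨m, hm⟩ := support_nonempty.2 hp0
    obtain ⟨l, hl, hle⟩ := join m hm n hn
    refine hdis v (all l hl v ?_) hv
    rw [hle, add_ne]
    exact Or.inr (by simpa using hnv)
  rw [vars_eq_empty_iff_eq_C] at hv
  rw [hv]
  refine IsUnit.map C (isUnit_iff_ne_zero.2 fun h => hq0 ?_)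
  rw [hv, h, C_0]

open MvPolynomial in
theorem irreducible_of_paths {E F : Type*} [Field F] (S : Finset (List E)) (a b : E)
    (hab : a ≠ b) (hS : S.Nonempty)
    (hnd : ∀ l ∈ S, l.Nodup) (hhead : ∀ l ∈ S, l.head? = some a)
    (hlast : ∀ l ∈ S, l.getLast? = some b)
    (hnb : ∀ c, (∀ l ∈ S, c ∈ l) → c = a ∨ c = b) :
    Irreducible (∑ l ∈ S, pathMonomial F l) := by
  classical
  have hcons : ∀ l ∈ S, ∃ f t, l = a :: f :: t := by
    intro l hl
    have h1 := hhead l hl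
    have h2 := hlast l hl
    match l with
    | [] => simp at h1
    | [x] => simp at h1 h2; exact absurd (h1.symm.trans h2) hab
    | x :: y :: t => simp at h1; exact ⟨y, t, by rw [h1]⟩
  have hsupp : ∀ d, d ∈ (∑ l ∈ S, pathMonomial F l).support ↔ ∃ l ∈ S, pexp l = d := by
    intro d
    rw [mem_support_iff, coeff_sum]
    simp only [pathMonomial_eq, coeff_monomial]
    constructor
    · intro h
      obtain ⟨l, hl, h⟩ := Finset.exists_ne_zero_of_sum_ne_zero h
      refine ⟨l, hl, ?_⟩
      by_contra h'
      simp [h'] at h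
    · rintro ⟨l, hl, rfl⟩
      rw [Finset.sum_eq_single l]
      · simp
      · intro l' hl' hne
        rw [if_neg]
        intro h
        exact hne (pexp_inj l' l a (hnd _ hl') (hnd _ hl) (hhead _ hl') (hhead _ hl) h)
      · intro h; exact absurd hl h
  generalize (∑ l ∈ S, pathMonomial F l) = M at hsupp
  obtain ⟨l0, hl0⟩ := hS
  obtain ⟨f0, t0, rfl⟩ := hcons l0 hl0
  have h00 : pexp (a :: f0 :: t0) (a, f0) ≠ 0 := by rw [pexp_cons_cons]; simp
  have hd0 := (hsupp _).2 ⟨_, hl0, rfl⟩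
  constructor
  · intro hu
    rw [isUnit_iff_eq_C_of_isReduced] at hu
    obtain ⟨r, -, hr⟩ := hu
    rw [hr, mem_support_iff, coeff_C] at hd0
    have : (0 : E × E →₀ ℕ) = pexp (a :: f0 :: t0) := by
      by_contra h; simp [h] at hd0
    rw [← this] at h00
    simp at h00
  · intro p q hpq
    subst hpq
    have hpq0 : p * q ≠ 0 := by
      intro h; rw [h] at hd0; simp at hd0
    have hp0 := left_ne_zero_of_mul hpq0
    have hq0 := right_ne_zero_of_mul hpq0
    have hv : (a, f0) ∈ (p * q).vars :=
      (mem_vars_iff_mem_support _).2 ⟨_, hd0, by simpa using h00⟩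
    rcases Finset.mem_union.1 (vars_mul p q hv) with h | h
    · exact Or.inr (unit_of_first S a b hnd hlast hcons hnb p q hp0 hq0 hsupp f0 t0 hl0 h)
    · exact Or.inl (unit_of_first S a b hnd hlast hcons hnb q p hq0 hp0
        (by rwa [mul_comm]) f0 t0 hl0 h)

theorem edgePath_split {V E : Type*} (src dst : E → V) (a b c : E) (s t : List E) :
    IsEdgePath src dst a b (s ++ c :: t) ↔
      IsEdgePath src dst a c (s ++ [c]) ∧ IsEdgePath src dst c b (c :: t) := by
  have h1 : (s ++ c :: t).getLast? = (c :: t).getLast? := by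
    rw [List.getLast?_append]; cases h : (c :: t).getLast? <;> simp_all
  have h2 : (s ++ c :: t).head? = (s ++ [c]).head? := by cases s <;> simp
  have h3 : (s ++ c :: t).Chain' (EdgeAdj src dst) ↔
    (s ++ [c]).Chain' (EdgeAdj src dst) ∧ (c :: t).Chain' (EdgeAdj src dst) := List.isChain_split
  unfold IsEdgePath
  rw [h1, h2, h3]
  simp
  tauto

theorem edgePath_nodup {V E : Type*} (src dst : E → V)
    (hacyc : ∀ e : E, ¬ Relation.TransGen (EdgeAdj src dst) e e) (a b : E) (l : List E)
    (h : IsEdgePath src dst a b l) : l.Nodup := by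
  have h1 : l.IsChain (EdgeAdj src dst) := h.1
  have h2 : l.IsChain (Relation.TransGen (EdgeAdj src dst)) :=
    h1.imp fun _ _ h => Relation.TransGen.single h
  refine h2.pairwise.imp ?_
  rintro x y hxy rfl
  exact hacyc _ hxy

theorem edgePath_reach {V E : Type*} (src dst : E → V) (a b : E) (l : List E)
    (h : IsEdgePath src dst a b l) : Relation.ReflTransGen (EdgeAdj src dst) a b := by
  obtain ⟨h1, h2, h3⟩ := h
  cases l with
  | nil => simp at h2
  | cons x l =>
    simp only [List.head?_cons, Option.some.injEq] at h2
    subst h2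
    refine List.relationReflTransGen_of_exists_isChain_cons l h1 ?_
    rw [List.getLast?_eq_some_getLast (by simp)] at h3
    simpa using h3

theorem exists_edgePath {V E : Type*} (src dst : E → V) (a b : E)
    (h : Relation.ReflTransGen (EdgeAdj src dst) a b) : ∃ t, IsEdgePath src dst a b (a :: t) := by
  obtain ⟨l, h1, h2⟩ := List.exists_isChain_cons_of_relationReflTransGen h
  refine ⟨l, h1, rfl, ?_⟩
  rw [List.getLast?_eq_some_getLast (by simp), h2]

theorem edgePath_mem {V E : Type*} (src dst : E → V) (a b c : E) (l : List E)
    (h : IsEdgePath src dst a b l) (hc : c ∈ l) : ∃ s t, l = s ++ c :: t ∧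
      IsEdgePath src dst a c (s ++ [c]) ∧ IsEdgePath src dst c b (c :: t) := by
  obtain ⟨s, t, rfl⟩ := List.append_of_mem hc
  exact ⟨s, t, rfl, (edgePath_split ..).1 h⟩

theorem edgePath_last {V E : Type*} (src dst : E → V) (a b : E) (l : List E)
    (h : IsEdgePath src dst a b l) : ∃ s, l = s ++ [b] := by
  obtain ⟨s, hs⟩ := List.getLast?_eq_some_iff.1 h.2.2
  exact ⟨s, hs⟩

theorem edgePath_first {V E : Type*} (src dst : E → V) (a b : E) (l : List E)
    (h : IsEdgePath src dst a b l) : ∃ t, l = a :: t :=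
  List.head?_eq_some_iff.1 h.2.1

theorem transfer_mul {V E F : Type*} [Field F] (src dst : E → V)
    (hacyc : ∀ e : E, ¬ Relation.TransGen (EdgeAdj src dst) e e)
    (Paths : E → E → Finset (List E))
    (hPaths : ∀ a b l, l ∈ Paths a b ↔ IsEdgePath src dst a b l)
    (a b c : E) (hc : ∀ l ∈ Paths a b, c ∈ l) :
    transferPoly F Paths a b = transferPoly F Paths a c * transferPoly F Paths c b := by
  unfold transferPoly
  rw [Finset.sum_mul_sum, ← Finset.sum_product']
  symm
  refine Finset.sum_nbij (fun x => x.1 ++ x.2.tail) ?_ ?_ ?_ ?_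
  · rintro ⟨l1, l2⟩ h
    simp only [Finset.mem_product, hPaths] at h ⊢
    obtain ⟨s, rfl⟩ := edgePath_last _ _ _ _ _ h.1
    obtain ⟨t, rfl⟩ := edgePath_first _ _ _ _ _ h.2
    have := (edgePath_split src dst a b c s t).2 h
    simpa using this
  · rintro ⟨l1, l2⟩ h ⟨l1', l2'⟩ h' heq
    simp only [Finset.coe_product, Set.mem_prod, Finset.mem_coe, hPaths] at h h'
    obtain ⟨s, rfl⟩ := edgePath_last _ _ _ _ _ h.1
    obtain ⟨t, rfl⟩ := edgePath_first _ _ _ _ _ h.2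
    obtain ⟨s', rfl⟩ := edgePath_last _ _ _ _ _ h'.1
    obtain ⟨t', rfl⟩ := edgePath_first _ _ _ _ _ h'.2
    have n1 := edgePath_nodup src dst hacyc _ _ _ ((edgePath_split src dst a b c s t).2 h)
    have n2 := edgePath_nodup src dst hacyc _ _ _ ((edgePath_split src dst a b c s' t').2 h')
    simp only [List.tail_cons, List.append_assoc, List.singleton_append] at heq
    have k1 : c ∉ s := by
      intro hcs; exact (List.nodup_append.1 n1).2.2 c hcs c (by simp) rfl
    have k2 : c ∉ s' := by
      intro hcs; exact (List.nodup_append.1 n2).2.2 c hcs c (by simp) rfl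
    have hst : s = s' ∧ t = t' := by
      clear n1 n2 h h'
      induction s generalizing s' with
      | nil =>
        cases s' with
        | nil => simpa using heq
        | cons x s' => simp at heq k2; exact absurd heq.1 k2.1
      | cons y s ih =>
        cases s' with
        | nil => simp at heq k1; exact absurd heq.1.symm k1.1
        | cons x s' =>
          simp at heq k1 k2
          have := ih s' heq.2 k1.2 k2.2
          exact ⟨by rw [heq.1, this.1], this.2⟩
    rw [hst.1, hst.2]
  · intro l hl
    rw [Finset.mem_coe] at hl
    have h1 := hc l hl
    rw [hPaths] at hl
    obtain ⟨s, t, rfl, h2, h3⟩ := edgePath_mem _ _ _ _ _ _ hl h1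
    refine ⟨(s ++ [c], c :: t), ?_, by simp⟩
    simp only [Finset.coe_product, Set.mem_prod, Finset.mem_coe, hPaths]
    exact ⟨h2, h3⟩
  · rintro ⟨l1, l2⟩ h
    simp only [Finset.mem_product, hPaths] at h
    obtain ⟨s, rfl⟩ := edgePath_last _ _ _ _ _ h.1
    obtain ⟨t, rfl⟩ := edgePath_first _ _ _ _ _ h.2
    simp only [List.tail_cons, List.append_assoc, List.singleton_append]
    rw [pathMonomial_eq, pathMonomial_eq, pathMonomial_eq, pexp_append s t c,
      MvPolynomial.monomial_mul, one_mul]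

/-- Let `e, e'` be edges of a finite DAG with `e'` reachable from `e`,
and let `e = bs 0, bs 1, …, bs (k-1) = e'` be the bottlenecks between `e` and `e'`
(edges lying on every directed path from `e` to `e'`) listed in topological order. Then
`m_{ee'} = Π_{i=0}^{k-2} m_{bs i, bs (i+1)}`, and each factor is irreducible. -/
theorem transfer_factorization_along_bottlenecks
    {V E F : Type*} [Fintype E] [Field F] (src dst : E → V)
    (hacyc : ∀ e : E, ¬ Relation.TransGen (EdgeAdj src dst) e e)
    (Paths : E → E → Finset (List E))
    (hPaths : ∀ a b l, l ∈ Paths a b ↔ IsEdgePath src dst a b l)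
    (e e' : E) (hreach : (Paths e e').Nonempty)
    (k : ℕ) (hk : 2 ≤ k) (bs : ℕ → E)
    (h0 : bs 0 = e) (hlastb : bs (k - 1) = e')
    (hord : ∀ i j, i < j → j < k → Relation.TransGen (EdgeAdj src dst) (bs i) (bs j))
    (hbot : ∀ c : E, (∀ l ∈ Paths e e', c ∈ l) ↔ ∃ i < k, bs i = c) :
    transferPoly F Paths e e' =
        ∏ i ∈ Finset.range (k - 1), transferPoly F Paths (bs i) (bs (i + 1)) ∧
      ∀ i < k - 1, Irreducible (transferPoly F Paths (bs i) (bs (i + 1))) := by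
  have hne : ∀ i j, i < j → j < k → bs i ≠ bs j := by
    intro i j hij hj h
    have := hord i j hij hj
    rw [h] at this
    exact hacyc _ this
  have refl : ∀ i j, i ≤ j → j < k → Relation.ReflTransGen (EdgeAdj src dst) (bs i) (bs j) := by
    intro i j hij hj
    rcases hij.eq_or_lt with rfl | h
    · exact .refl
    · exact (hord i j h hj).to_reflTransGen
  -- every path from `e` to `bs j` passes through `bs i` for `i ≤ j`
  have thru : ∀ i j, i < j → j < k → ∀ l ∈ Paths e (bs j), bs i ∈ l := by
    intro i j hij hj l hl
    rw [hPaths] at hl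
    obtain ⟨s, rfl⟩ := edgePath_last _ _ _ _ _ hl
    obtain ⟨t, ht⟩ := exists_edgePath src dst (bs j) e' (by
      rw [← hlastb]; exact refl j (k - 1) (by omega) (by omega))
    have hp := (edgePath_split src dst e e' (bs j) s t).2 ⟨hl, ht⟩
    have hm := (hbot (bs i)).2 ⟨i, by omega, rfl⟩ _ ((hPaths _ _ _).2 hp)
    rcases List.mem_append.1 hm with h | h
    · exact List.mem_append_left _ h
    · exfalso
      obtain ⟨s2, t2, -, h2, -⟩ := edgePath_mem _ _ _ _ _ _ ht h
      have h3 := edgePath_reach _ _ _ _ _ h2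
      exact hacyc _ (Relation.TransGen.trans_left (hord i j hij hj) h3)
  constructor
  · have key : ∀ j, j + 1 < k → transferPoly F Paths e (bs (j + 1)) =
        ∏ i ∈ Finset.range (j + 1), transferPoly F Paths (bs i) (bs (i + 1)) := by
      intro j
      induction j with
      | zero => intro _; simp [h0]
      | succ j ih =>
        intro hj
        rw [Finset.prod_range_succ, ← ih (by omega)]
        exact transfer_mul src dst hacyc Paths hPaths _ _ _ (thru (j + 1) (j + 2) (by omega) hj)
    have := key (k - 2) (by omega)
    rw [show k - 2 + 1 = k - 1 by omega, hlastb] at this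
    exact this
  · intro i hi
    refine irreducible_of_paths _ (bs i) (bs (i + 1)) (hne i (i + 1) (by omega) (by omega)) ?_
      (fun l hl => edgePath_nodup src dst hacyc _ _ _ ((hPaths _ _ _).1 hl))
      (fun l hl => ((hPaths _ _ _).1 hl).2.1) (fun l hl => ((hPaths _ _ _).1 hl).2.2) ?_
    · obtain ⟨t, ht⟩ := exists_edgePath src dst _ _ (refl i (i + 1) (by omega) (by omega))
      exact ⟨_, (hPaths _ _ _).2 ht⟩
    · intro c hc
      have hcb : ∀ l ∈ Paths e e', c ∈ l := by
        intro l hl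
        have hm := (hbot (bs (i + 1))).2 ⟨i + 1, by omega, rfl⟩ l hl
        rw [hPaths] at hl
        obtain ⟨s, t, rfl, h1, h2⟩ := edgePath_mem _ _ _ _ _ _ hl hm
        have hm2 := thru i (i + 1) (by omega) (by omega) _ ((hPaths _ _ _).2 h1)
        obtain ⟨s2, t2, he, h3, h4⟩ := edgePath_mem _ _ _ _ _ _ h1 hm2
        have h5 := hc _ ((hPaths _ _ _).2 h4)
        have h6 : c ∈ s ++ [bs (i + 1)] := by
          rw [he]; exact List.mem_append_right _ h5
        rcases List.mem_append.1 h6 with h | h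
        · exact List.mem_append_left _ h
        · simp at h; simp [h]
      obtain ⟨j, hj, rfl⟩ := (hbot c).1 hcb
      obtain ⟨t, ht⟩ := exists_edgePath src dst _ _ (refl i (i + 1) (by omega) (by omega))
      obtain ⟨s2, t2, -, h3, h4⟩ := edgePath_mem _ _ _ _ _ _ ht (hc _ ((hPaths _ _ _).2 ht))
      have h3 := edgePath_reach _ _ _ _ _ h3
      have h4 := edgePath_reach _ _ _ _ _ h4
      rcases lt_trichotomy j i with h | h | h
      · exact absurd (Relation.TransGen.trans_left (hord j i h (by omega)) h3) (hacyc _)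
      · exact Or.inl (by rw [h])
      · rcases Nat.eq_or_lt_of_le (show i + 1 ≤ j from h) with h | h
        · exact Or.inr (by rw [h])
        · exact absurd (Relation.TransGen.trans_left (hord (i + 1) j h hj) h4) (hacyc _)
end
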